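/- For every v ∈ ℝ^{2n} and c > 0, the function z ↦ c‖z‖_{2,1|ℝ^{2n}} + (1/2)‖z − v‖₂² has a unique global minimizer z* over ℝ^{2n}, and it is given pairwise by: for each j ∈ {1,…,n}, setting d_j = (v_j, v_{n+j}) ∈ ℝ², one has (z*_j, z*_{n+j}) = max{ (‖d_j‖₂ − c)/‖d_j‖₂ , 0 } · d_j, interpreted as (0,0) when d_j = (0,0). -/

import Mathlib

/-!
A proximal objective `f z + ½‖z - v‖²` has the unique minimizer `w` as soon as `v - w` is a
subgradient of `f` at `w`: expanding the square shows that the value at `z` exceeds the value at `w`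
by at least `½‖z - w‖²`. For `f = c‖·‖` on an inner product space, soft-thresholding satisfies this
condition, because the residual `g = v - w` has norm at most `c` and `⟪g, w⟫ = c‖w‖`. Subgradient
inequalities add up over the blocks of an `ℓ²` direct sum, and `ℝ^{2n}` is the `ℓ²` direct sum of
`n` Euclidean planes, on which the `(2,1)`-norm is the sum of the block norms.
-/

open scoped BigOperators

/-- First index of the `j`-th pair in `ℝ^{2n}`. -/
def pidx₀ {n : ℕ} (j : Fin n) : Fin (2 * n) := ⟨j.1, by have := j.2; omega⟩

/-- Second index of the `j`-th pair in `ℝ^{2n}`. -/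
def pidx₁ {n : ℕ} (j : Fin n) : Fin (2 * n) := ⟨n + j.1, by have := j.2; omega⟩

/-- The `(2,1)`-norm on `ℝ^{2n}`: `‖v‖_{2,1} = ∑_j sqrt(v_j² + v_{n+j}²)`. -/
noncomputable def norm21 {n : ℕ} (v : Fin (2 * n) → ℝ) : ℝ :=
  ∑ j : Fin n, Real.sqrt ((v (pidx₀ j)) ^ 2 + (v (pidx₁ j)) ^ 2)

/-- Squared Euclidean norm. -/
def sqnorm {ι : Type*} [Fintype ι] (v : ι → ℝ) : ℝ := ∑ i, (v i) ^ 2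

open scoped RealInnerProductSpace

/-- `a` is the only global minimizer of `f`. -/
def IsUniqueMinimizer {α : Type*} (f : α → ℝ) (a : α) : Prop :=
  (∀ x, f a ≤ f x) ∧ ∀ x, (∀ y, f x ≤ f y) → x = a

lemma IsUniqueMinimizer.comp_equiv {α β : Type*} {f : α → ℝ} {a : α}
    (h : IsUniqueMinimizer f a) (e : β ≃ α) : IsUniqueMinimizer (f ∘ e) (e.symm a) := by
  refine ⟨fun x => ?_, fun x hx => ?_⟩
  · simpa only [Function.comp_apply, e.apply_symm_apply] using h.1 (e x)
  · exact e.eq_symm_apply.2 (h.2 (e x) (e.forall_congr_right.1 hx))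

section Subgradient

variable {E : Type*} [NormedAddCommGroup E] [InnerProductSpace ℝ E]

lemma prox_add_norm_sq_le_of_subgradient {f : E → ℝ} {v w z : E}
    (h : f w + ⟪v - w, z - w⟫ ≤ f z) :
    f w + 1 / 2 * ‖w - v‖ ^ 2 + 1 / 2 * ‖z - w‖ ^ 2 ≤ f z + 1 / 2 * ‖z - v‖ ^ 2 := by
  have expand : ‖z - v‖ ^ 2 = ‖z - w‖ ^ 2 - 2 * ⟪v - w, z - w⟫ + ‖w - v‖ ^ 2 := by
    rw [← sub_sub_sub_cancel_right z v w, norm_sub_sq_real, real_inner_comm, norm_sub_rev v w]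
  linarith

lemma isUniqueMinimizer_prox_of_subgradient {f : E → ℝ} {v w : E}
    (h : ∀ z, f w + ⟪v - w, z - w⟫ ≤ f z) :
    IsUniqueMinimizer (fun z => f z + 1 / 2 * ‖z - v‖ ^ 2) w := by
  have growth (z : E) := prox_add_norm_sq_le_of_subgradient (h z)
  refine ⟨fun z => ?_, fun z hz => ?_⟩
  · linarith [growth z, sq_nonneg ‖z - w‖]
  · have dist_zero : ‖z - w‖ ^ 2 = 0 :=
      le_antisymm (by linarith [growth z, hz w]) (sq_nonneg _)
    exact sub_eq_zero.1 (norm_eq_zero.1 (pow_eq_zero_iff two_ne_zero |>.1 dist_zero))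

lemma mul_norm_add_inner_le {c : ℝ} {g w : E} (hg : ‖g‖ ≤ c) (hgw : ⟪g, w⟫ = c * ‖w‖) (z : E) :
    c * ‖w‖ + ⟪g, z - w⟫ ≤ c * ‖z‖ :=
  calc
    c * ‖w‖ + ⟪g, z - w⟫ = ⟪g, z⟫ := by rw [inner_sub_right, hgw]; ring
    _ ≤ ‖g‖ * ‖z‖ := real_inner_le_norm g z
    _ ≤ c * ‖z‖ := by gcongr

end Subgradient

/-- Soft-thresholding of a vector at level `c`: it shortens `d` by `c`, down to `0` if `‖d‖ ≤ c`.
At `d = 0` the quotient is the junk value `0`, but the product with `d` vanishes anyway. -/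
noncomputable def softThreshold {E : Type*} [NormedAddCommGroup E] [NormedSpace ℝ E]
    (c : ℝ) (d : E) : E :=
  max ((‖d‖ - c) / ‖d‖) 0 • d

section NormedSpace

variable {E : Type*} [NormedAddCommGroup E] [NormedSpace ℝ E]

lemma softThreshold_of_norm_le {c : ℝ} {d : E} (h : ‖d‖ ≤ c) :
    softThreshold c d = 0 := by
  have factor_nonpos : (‖d‖ - c) / ‖d‖ ≤ 0 :=
    div_nonpos_of_nonpos_of_nonneg (sub_nonpos.2 h) (norm_nonneg d)
  rw [softThreshold, max_eq_right factor_nonpos, zero_smul]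

lemma softThreshold_of_le_norm {c : ℝ} {d : E} (h : c ≤ ‖d‖) :
    softThreshold c d = ((‖d‖ - c) / ‖d‖) • d := by
  rw [softThreshold, max_eq_left (div_nonneg (sub_nonneg.2 h) (norm_nonneg d))]

lemma sub_softThreshold_of_le_norm {c : ℝ} {d : E} (h : c ≤ ‖d‖) :
    d - softThreshold c d = (c / ‖d‖) • d := by
  rcases eq_or_ne d 0 with rfl | hd
  · simp [softThreshold]
  · rw [softThreshold_of_le_norm h, sub_div, div_self (norm_ne_zero_iff.2 hd), sub_smul, one_smul,
      sub_sub_cancel]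

lemma norm_sub_softThreshold_le {c : ℝ} (hc : 0 ≤ c) (d : E) :
    ‖d - softThreshold c d‖ ≤ c := by
  rcases le_total ‖d‖ c with h | h
  · rwa [softThreshold_of_norm_le h, sub_zero]
  · rw [sub_softThreshold_of_le_norm h, norm_smul_of_nonneg (by positivity)]
    exact mul_le_of_le_div₀ hc (norm_nonneg d) le_rfl

end NormedSpace

section InnerProductSpace

variable {E : Type*} [NormedAddCommGroup E] [InnerProductSpace ℝ E]

lemma inner_sub_softThreshold (c : ℝ) (d : E) :
    ⟪d - softThreshold c d, softThreshold c d⟫ = c * ‖softThreshold c d‖ := by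
  rcases le_total ‖d‖ c with h | h
  · simp only [softThreshold_of_norm_le h, inner_zero_right, norm_zero, mul_zero]
  · have factor_nonneg : 0 ≤ (‖d‖ - c) / ‖d‖ := div_nonneg (sub_nonneg.2 h) (norm_nonneg d)
    rw [sub_softThreshold_of_le_norm h, softThreshold_of_le_norm h, real_inner_smul_left,
      real_inner_smul_right, real_inner_self_eq_norm_sq, norm_smul_of_nonneg factor_nonneg]
    field_simp

lemma mul_norm_softThreshold_add_inner_le {c : ℝ} (hc : 0 ≤ c) (d z : E) :
    c * ‖softThreshold c d‖ + ⟪d - softThreshold c d, z - softThreshold c d⟫ ≤ c * ‖z‖ :=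
  mul_norm_add_inner_le (norm_sub_softThreshold_le hc d) (inner_sub_softThreshold c d) z

end InnerProductSpace

theorem prox_norm21_pairwise_shrinkage_general {ι : Type*} [Fintype ι] {E : ι → Type*}
    [∀ i, NormedAddCommGroup (E i)] [∀ i, InnerProductSpace ℝ (E i)]
    {c : ι → ℝ} (hc : ∀ i, 0 ≤ c i) (v : PiLp 2 E) :
    IsUniqueMinimizer (fun z : PiLp 2 E => (∑ i, c i * ‖z i‖) + 1 / 2 * ‖z - v‖ ^ 2)
      (WithLp.toLp 2 fun i => softThreshold (c i) (v i)) := by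
  refine isUniqueMinimizer_prox_of_subgradient fun z => ?_
  rw [PiLp.inner_apply, ← Finset.sum_add_distrib]
  exact Finset.sum_le_sum fun i _ => mul_norm_softThreshold_add_inner_le (hc i) (v i) (z i)

section Pairs

variable {n : ℕ}

lemma finProdFinEquiv_zero_eq_pidx₀ (j : Fin n) : finProdFinEquiv ((0 : Fin 2), j) = pidx₀ j := by
  ext; simp [pidx₀]

lemma finProdFinEquiv_one_eq_pidx₁ (j : Fin n) : finProdFinEquiv ((1 : Fin 2), j) = pidx₁ j := by
  ext; simp [pidx₁, add_comm]

/-- The decomposition of `ℝ^{2n}` into the `n` Euclidean planes of the pairs `(u_j, u_{n+j})`.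
The pairs are read off through `finProdFinEquiv : Fin 2 × Fin n ≃ Fin (2 * n)`, which sends
`(k, j)` to `j + n * k`. -/
def pairs (n : ℕ) :
    (Fin (2 * n) → ℝ) ≃ₗ[ℝ] PiLp 2 fun _ : Fin n => EuclideanSpace ℝ (Fin 2) where
  toFun u := WithLp.toLp 2 fun j => WithLp.toLp 2 fun k => u (finProdFinEquiv (k, j))
  invFun p i := p (finProdFinEquiv.symm i).2 (finProdFinEquiv.symm i).1
  map_add' _ _ := rfl
  map_smul' _ _ := rfl
  left_inv u := funext fun i => congrArg u (finProdFinEquiv.apply_symm_apply i)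
  right_inv p := by ext; simp

lemma pairs_apply_zero (u : Fin (2 * n) → ℝ) (j : Fin n) : pairs n u j 0 = u (pidx₀ j) :=
  congrArg u (finProdFinEquiv_zero_eq_pidx₀ j)

lemma pairs_apply_one (u : Fin (2 * n) → ℝ) (j : Fin n) : pairs n u j 1 = u (pidx₁ j) :=
  congrArg u (finProdFinEquiv_one_eq_pidx₁ j)

lemma norm_pairs_apply (u : Fin (2 * n) → ℝ) (j : Fin n) :
    ‖pairs n u j‖ = Real.sqrt (u (pidx₀ j) ^ 2 + u (pidx₁ j) ^ 2) := by
  simp only [EuclideanSpace.norm_eq, Fin.sum_univ_two, Real.norm_eq_abs, sq_abs,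
    pairs_apply_zero, pairs_apply_one]

lemma norm21_eq_sum_norm_pairs (u : Fin (2 * n) → ℝ) : norm21 u = ∑ j, ‖pairs n u j‖ := by
  simp only [norm21, norm_pairs_apply]

lemma sqnorm_eq_norm_pairs_sq (u : Fin (2 * n) → ℝ) : sqnorm u = ‖pairs n u‖ ^ 2 := by
  have norm_sq_block (j : Fin n) : ‖pairs n u j‖ ^ 2 = ∑ k, u (finProdFinEquiv (k, j)) ^ 2 :=
    EuclideanSpace.real_norm_sq_eq _
  rw [PiLp.norm_sq_eq_of_L2, Finset.sum_congr rfl fun j _ => norm_sq_block j, Finset.sum_comm,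
    ← Fintype.sum_prod_type', sqnorm, ← finProdFinEquiv.sum_comp]

lemma prox_norm21_eq_prox_pairs (c : ℝ) (v z : Fin (2 * n) → ℝ) :
    c * norm21 z + 1 / 2 * sqnorm (z - v)
      = (∑ j, c * ‖pairs n z j‖) + 1 / 2 * ‖pairs n z - pairs n v‖ ^ 2 := by
  rw [norm21_eq_sum_norm_pairs, Finset.mul_sum, sqnorm_eq_norm_pairs_sq, map_sub]

end Pairs

/-- for `v ∈ ℝ^{2n}` and `c > 0`, the function
`z ↦ c‖z‖_{2,1} + (1/2)‖z − v‖₂²` has a unique global minimizer `z*`, given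
pairwise by the shrinkage formula (the zero vector on pairs with `d_j = 0`;
in Lean division by zero yields `0`, so the formula covers that case). -/
theorem prox_norm21_pairwise_shrinkage
    (n : ℕ) (hn : 0 < n) (v : Fin (2 * n) → ℝ) (c : ℝ) (hc : 0 < c) :
    ∃ zstar : Fin (2 * n) → ℝ,
      (∀ z : Fin (2 * n) → ℝ,
          c * norm21 zstar + 1 / 2 * sqnorm (zstar - v)
            ≤ c * norm21 z + 1 / 2 * sqnorm (z - v)) ∧
      (∀ z : Fin (2 * n) → ℝ,
          (∀ z' : Fin (2 * n) → ℝ,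
              c * norm21 z + 1 / 2 * sqnorm (z - v)
                ≤ c * norm21 z' + 1 / 2 * sqnorm (z' - v)) →
          z = zstar) ∧
      (∀ j : Fin n,
          zstar (pidx₀ j)
            = max ((Real.sqrt ((v (pidx₀ j)) ^ 2 + (v (pidx₁ j)) ^ 2) - c)
                    / Real.sqrt ((v (pidx₀ j)) ^ 2 + (v (pidx₁ j)) ^ 2)) 0
            * v (pidx₀ j) ∧
          zstar (pidx₁ j)
            = max ((Real.sqrt ((v (pidx₀ j)) ^ 2 + (v (pidx₁ j)) ^ 2) - c)
                    / Real.sqrt ((v (pidx₀ j)) ^ 2 + (v (pidx₁ j)) ^ 2)) 0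
            * v (pidx₁ j)) := by
  have minimizer := (prox_norm21_pairwise_shrinkage_general (fun _ => hc.le)
    (pairs n v)).comp_equiv (pairs n).toEquiv
  simp only [prox_norm21_eq_prox_pairs, ← norm_pairs_apply]
  refine ⟨(pairs n).symm (WithLp.toLp 2 fun j => softThreshold c (pairs n v j)),
    minimizer.1, minimizer.2, fun j => ?_⟩
  simp [← pairs_apply_zero, ← pairs_apply_one, softThreshold]
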